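/- arXiv:1603.03496 — 4 statements merged into one kernel-verified Lean document; each statement's English description precedes it below -/
import Mathlib

section
/- For every integer d ≥ 1, every real a > 0, every real ν > 0 and every real r ≥ 0, the identity ∫₀^r y^{d-1} (a + y²)^{-ν-d/2} dy = (1/(2 a^ν)) ∫₀^{r²/(a+r²)} x^{d/2-1} (1-x)^{ν-1} dx holds. -/
open MeasureTheory

lemma one_sub_sq_div_add_sq {K : Type*} [Field K] {a y : K} (h : a + y ^ 2 ≠ 0) :
    1 - y ^ 2 / (a + y ^ 2) = a / (a + y ^ 2) := by
  rw [one_sub_div h, add_sub_cancel_right]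

lemma hasDerivAt_sq_div_add_sq {𝕜 : Type*} [NontriviallyNormedField 𝕜] {a y : 𝕜}
    (h : a + y ^ 2 ≠ 0) :
    HasDerivAt (fun t : 𝕜 ↦ t ^ 2 / (a + t ^ 2)) (2 * a * y / (a + y ^ 2) ^ 2) y := by
  have hsq : HasDerivAt (fun t : 𝕜 ↦ t ^ 2) (2 * y) y := by simpa using hasDerivAt_pow 2 y
  convert! hsq.fun_div (hsq.const_add a) h using 2
  ring

theorem integral_deriv_smul_comp_sq_div_add_sq {E : Type*} [NormedAddCommGroup E]
    [NormedSpace ℝ E] {a b c : ℝ} (ha : 0 < a) (hb : 0 ≤ b) (hc : 0 ≤ c) (g : ℝ → E) :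
    ∫ y in b..c, (2 * a * y / (a + y ^ 2) ^ 2) • g (y ^ 2 / (a + y ^ 2)) =
      ∫ x in (b ^ 2 / (a + b ^ 2))..(c ^ 2 / (a + c ^ 2)), g x := by
  have hderiv (y : ℝ) := hasDerivAt_sq_div_add_sq (a := a) (y := y) (by positivity)
  refine intervalIntegral.integral_deriv_smul_comp_of_deriv_nonneg
    (fun y _ ↦ (hderiv y).continuousAt.continuousWithinAt) (fun y _ ↦ hderiv y) fun y hy ↦ ?_
  have hy₀ : 0 ≤ y := (le_min hb hc).trans hy.1.le
  positivity

lemma deriv_mul_rpow_mul_one_sub_rpow_sq_div_add_sq {a y : ℝ} (ha : 0 < a) (hy : 0 < y)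
    (p ν : ℝ) :
    2 * a * y / (a + y ^ 2) ^ 2 *
        ((y ^ 2 / (a + y ^ 2)) ^ (p / 2 - 1) * (1 - y ^ 2 / (a + y ^ 2)) ^ (ν - 1)) =
      2 * a ^ ν * (y ^ (p - 1) * (a + y ^ 2) ^ (-ν - p / 2)) := by
  have hs : 0 < a + y ^ 2 := by positivity
  have hy_pow : (y ^ 2) ^ (p / 2 - 1) * y = y ^ (p - 1) := by
    rw [← Real.rpow_natCast_mul hy.le, ← Real.rpow_add_one hy.ne']
    congr 1
    push_cast
    ring
  have ha_pow : a ^ (ν - 1) * a = a ^ ν := by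
    rw [← Real.rpow_add_one ha.ne', sub_add_cancel]
  have hs_pow : ((a + y ^ 2) ^ (p / 2 - 1))⁻¹ * ((a + y ^ 2) ^ (ν - 1))⁻¹ *
      ((a + y ^ 2) ^ 2)⁻¹ = (a + y ^ 2) ^ (-ν - p / 2) := by
    rw [← Real.rpow_natCast (a + y ^ 2) 2, ← Real.rpow_neg hs.le, ← Real.rpow_neg hs.le,
      ← Real.rpow_neg hs.le, ← Real.rpow_add hs, ← Real.rpow_add hs]
    congr 1
    push_cast
    ring
  rw [one_sub_sq_div_add_sq hs.ne', Real.div_rpow (sq_nonneg y) hs.le,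
    Real.div_rpow ha.le hs.le, ← hy_pow, ← ha_pow, ← hs_pow]
  ring

lemma intervalIntegrable_rpow_mul_add_sq_rpow {p a : ℝ} (hp : 0 < p) (ha : 0 < a)
    (s b c : ℝ) :
    IntervalIntegrable (fun y : ℝ ↦ y ^ (p - 1) * (a + y ^ 2) ^ s) volume b c := by
  refine (intervalIntegral.intervalIntegrable_rpow' (by linarith)).mul_continuousOn ?_
  exact Continuous.continuousOn <| (by fun_prop : Continuous fun y : ℝ ↦ a + y ^ 2).rpow_const
    fun y ↦ .inl (by positivity)

lemma intervalIntegrable_rpow_mul_one_sub_rpow {u b c : ℝ} (hu : 0 < u) (hb : b < 1)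
    (hc : c < 1) (v : ℝ) :
    IntervalIntegrable (fun x : ℝ ↦ x ^ (u - 1) * (1 - x) ^ (v - 1)) volume b c := by
  refine (intervalIntegral.intervalIntegrable_rpow' (by linarith)).mul_continuousOn ?_
  refine ContinuousOn.rpow_const (by fun_prop) fun x hx ↦ .inl ?_
  exact (sub_pos.2 (hx.2.trans_lt (max_lt hb hc))).ne'

theorem statement0_general {p a r : ℝ} (hp : 0 < p) (ha : 0 < a) (hr : 0 ≤ r) (ν : ℝ) :
    IntervalIntegrable (fun y : ℝ ↦ y ^ (p - 1) * (a + y ^ 2) ^ (-ν - p / 2)) volume 0 r ∧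
    IntervalIntegrable (fun x : ℝ ↦ x ^ (p / 2 - 1) * (1 - x) ^ (ν - 1)) volume
      0 (r ^ 2 / (a + r ^ 2)) ∧
    ∫ y in (0 : ℝ)..r, y ^ (p - 1) * (a + y ^ 2) ^ (-ν - p / 2) =
      1 / (2 * a ^ ν) *
        ∫ x in (0 : ℝ)..(r ^ 2 / (a + r ^ 2)), x ^ (p / 2 - 1) * (1 - x) ^ (ν - 1) := by
  have hr_lt : r ^ 2 / (a + r ^ 2) < 1 := (div_lt_one (by positivity)).2 (by linarith)
  refine ⟨intervalIntegrable_rpow_mul_add_sq_rpow hp ha _ _ _,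
    intervalIntegrable_rpow_mul_one_sub_rpow (half_pos hp) one_pos hr_lt ν, ?_⟩
  have hsubst := integral_deriv_smul_comp_sq_div_add_sq ha le_rfl hr
    fun x : ℝ ↦ x ^ (p / 2 - 1) * (1 - x) ^ (ν - 1)
  rw [zero_pow two_ne_zero, zero_div] at hsubst
  rw [← hsubst, one_div, eq_inv_mul_iff_mul_eq₀ (by positivity),
    ← intervalIntegral.integral_const_mul]
  exact intervalIntegral.integral_congr_Ioo_of_le hr fun y hy ↦
    (deriv_mul_rpow_mul_one_sub_rpow_sq_div_add_sq ha hy.1 p ν).symm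

/-- For every integer `d ≥ 1`, every real `a > 0`, `ν > 0` and `r ≥ 0`,
`∫₀^r y^(d-1) (a + y²)^(-ν-d/2) dy = (1/(2 a^ν)) ∫₀^{r²/(a+r²)} x^(d/2-1) (1-x)^(ν-1) dx`,
the change of variables `x = y²/(a+y²)`. -/
theorem statement0 (d : ℕ) (hd : 1 ≤ d) (a ν r : ℝ) (ha : 0 < a) (hν : 0 < ν) (hr : 0 ≤ r) :
    ∫ y in (0:ℝ)..r, y ^ (d - 1) * (a + y ^ 2) ^ (-ν - (d : ℝ) / 2) =
      1 / (2 * a ^ ν) *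
        ∫ x in (0:ℝ)..(r ^ 2 / (a + r ^ 2)), x ^ ((d : ℝ) / 2 - 1) * (1 - x) ^ (ν - 1) := by
  have hd_pos : (0 : ℝ) < d := Nat.cast_pos.2 hd
  simpa only [← Nat.cast_pred hd, Real.rpow_natCast] using
    (statement0_general hd_pos ha hr ν).2.2
end

section
/- Let d ≥ 1 be an integer and ν, ρ, σ > 0 reals, and let C be the Matérn spectral density on ℝ^d with parameters ν, ρ, σ. Then (i) ∫_{ℝ^d} C(‖k‖) dk = (2π)^d σ², and (ii) for every r ≥ 0, (2 π^{d/2} / ((2π)^d σ² Γ(d/2))) ∫₀^r ξ^{d-1} C(ξ) dξ = I_{r²/(4ν/ρ² + r²)}(d/2, ν). In other words, the normalized radial cumulative distribution function of the Matérn spectral density equals the regularized incomplete beta function evaluated at r²/(4ν/ρ² + r²) with parameters (d/2, ν). -/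
open MeasureTheory

/-- The Matérn spectral density on `ℝ^d` with parameters `ν, ρ, σ`. -/
noncomputable def maternSpectralDensity (d : ℕ) (ν ρ σ : ℝ) (ξ : ℝ) : ℝ :=
  σ ^ 2 * 2 ^ d * Real.pi ^ ((d : ℝ) / 2) * (Real.Gamma (ν + (d : ℝ) / 2) / Real.Gamma ν) *
    (4 * ν / ρ ^ 2) ^ ν * (4 * ν / ρ ^ 2 + ξ ^ 2) ^ (-ν - (d : ℝ) / 2)

/-- The regularized incomplete beta function
`I_x(p,q) = (∫₀^x t^(p-1)(1-t)^(q-1) dt) / B(p,q)` with `B(p,q) = Γ(p)Γ(q)/Γ(p+q)`. -/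
noncomputable def regIncompleteBeta (p q x : ℝ) : ℝ :=
  (∫ t in (0:ℝ)..x, t ^ (p - 1) * (1 - t) ^ (q - 1)) /
    (Real.Gamma p * Real.Gamma q / Real.Gamma (p + q))

/-!
In polar coordinates both claims concern `∫ ξ^(d-1) (a + ξ²)^(-ν-d/2) dξ` with `a = 4ν/ρ²`, over
`(0, ∞)` and over `(0, r]`. The substitution `t = ξ²/(a + ξ²)` turns it into the Beta integral
`∫ t^(d/2-1) (1-t)^(ν-1) dt` over `(0, 1)`, respectively over `(0, r²/(a + r²)]`, so the total mass
is the case `I_1(d/2, ν) = 1` of the radial distribution function.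
-/

section Substitution

variable {a : ℝ}

lemma hasDerivAt_sq_div_add_sq_s2 (ha : 0 < a) (ξ : ℝ) :
    HasDerivAt (fun ξ : ℝ => ξ ^ 2 / (a + ξ ^ 2)) (2 * a * ξ / (a + ξ ^ 2) ^ 2) ξ := by
  have h_sq : HasDerivAt (fun ξ : ℝ => ξ ^ 2) (2 * ξ) ξ := by simpa using hasDerivAt_pow 2 ξ
  exact (h_sq.fun_div (h_sq.const_add a) (by positivity)).congr_deriv (by ring)

lemma strictMonoOn_sq_div_add_sq (ha : 0 < a) :
    StrictMonoOn (fun ξ : ℝ => ξ ^ 2 / (a + ξ ^ 2)) (Set.Ici 0) := by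
  intro x hx y _ hxy
  have h_sq : x ^ 2 < y ^ 2 := pow_lt_pow_left₀ hxy hx two_ne_zero
  have h_cross : a * x ^ 2 < a * y ^ 2 := mul_lt_mul_of_pos_left h_sq ha
  change x ^ 2 / (a + x ^ 2) < y ^ 2 / (a + y ^ 2)
  rw [div_lt_div_iff₀ (by positivity) (by positivity)]
  linarith

lemma image_sq_div_add_sq_Ioc (ha : 0 < a) {r : ℝ} (hr : 0 ≤ r) :
    (fun ξ : ℝ => ξ ^ 2 / (a + ξ ^ 2)) '' Set.Ioc 0 r = Set.Ioc 0 (r ^ 2 / (a + r ^ 2)) := by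
  have h_cont : ContinuousOn (fun ξ : ℝ => ξ ^ 2 / (a + ξ ^ 2)) (Set.Icc 0 r) := fun ξ _ =>
    (hasDerivAt_sq_div_add_sq_s2 ha ξ).continuousAt.continuousWithinAt
  simpa using h_cont.image_Ioc_of_strictMonoOn hr
    ((strictMonoOn_sq_div_add_sq ha).mono Set.Icc_subset_Ici_self)

lemma image_sq_div_add_sq_Ioi (ha : 0 < a) :
    (fun ξ : ℝ => ξ ^ 2 / (a + ξ ^ 2)) '' Set.Ioi 0 = Set.Ioo 0 1 := by
  ext t
  constructor
  · rintro ⟨ξ, hξ : 0 < ξ, rfl⟩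
    exact ⟨by positivity, (div_lt_one (by positivity)).2 (by linarith)⟩
  · rintro ⟨ht₀, ht₁⟩
    have : 0 < 1 - t := sub_pos.2 ht₁
    refine ⟨√(a * t / (1 - t)), Real.sqrt_pos.2 (by positivity), ?_⟩
    have h_denom : a + a * t / (1 - t) = a / (1 - t) := by field_simp; ring
    simp only [Real.sq_sqrt (show 0 ≤ a * t / (1 - t) by positivity), h_denom]
    field_simp

lemma deriv_mul_betaKernel_sq_div_add_sq (ha : 0 < a) (p q : ℝ) {ξ : ℝ} (hξ : 0 < ξ) :
    2 * a * ξ / (a + ξ ^ 2) ^ 2 *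
        ((ξ ^ 2 / (a + ξ ^ 2)) ^ (p - 1) * (1 - ξ ^ 2 / (a + ξ ^ 2)) ^ (q - 1))
      = 2 * a ^ q * (ξ ^ (2 * p - 1) * (a + ξ ^ 2) ^ (-q - p)) := by
  have hs : 0 < a + ξ ^ 2 := by positivity
  have h_compl : 1 - ξ ^ 2 / (a + ξ ^ 2) = a / (a + ξ ^ 2) := by field_simp; ring
  have h_radius : ξ ^ (2 * p - 1) = (ξ ^ 2) ^ (p - 1) * ξ := by
    rw [← Real.rpow_natCast_mul hξ.le, ← Real.rpow_add_one hξ.ne']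
    push_cast; ring_nf
  have h_scale : a ^ q = a ^ (q - 1) * a := by
    rw [← Real.rpow_add_one ha.ne', sub_add_cancel]
  have h_denom : (a + ξ ^ 2) ^ (-q - p) =
      ((a + ξ ^ 2) ^ (p - 1) * (a + ξ ^ 2) ^ (q - 1) * (a + ξ ^ 2) ^ 2)⁻¹ := by
    rw [← Real.rpow_natCast (a + ξ ^ 2) 2, ← Real.rpow_add hs, ← Real.rpow_add hs,
      ← Real.rpow_neg hs.le]
    push_cast; ring_nf
  rw [h_compl, Real.div_rpow (sq_nonneg ξ) hs.le, Real.div_rpow ha.le hs.le, h_radius, h_scale,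
    h_denom]
  field_simp

lemma setIntegral_image_betaKernel (ha : 0 < a) (p q : ℝ) {s : Set ℝ} (hs : MeasurableSet s)
    (hs_pos : s ⊆ Set.Ioi 0) :
    ∫ t in (fun ξ : ℝ => ξ ^ 2 / (a + ξ ^ 2)) '' s, t ^ (p - 1) * (1 - t) ^ (q - 1)
      = 2 * a ^ q * ∫ ξ in s, ξ ^ (2 * p - 1) * (a + ξ ^ 2) ^ (-q - p) := by
  have h_mono : MonotoneOn (fun ξ : ℝ => ξ ^ 2 / (a + ξ ^ 2)) s :=
    (strictMonoOn_sq_div_add_sq ha).monotoneOn.mono (hs_pos.trans Set.Ioi_subset_Ici_self)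
  rw [integral_image_eq_integral_deriv_smul_of_monotoneOn hs
    (fun ξ _ => (hasDerivAt_sq_div_add_sq_s2 ha ξ).hasDerivWithinAt) h_mono, ← integral_const_mul]
  exact setIntegral_congr_fun hs fun ξ hξ => deriv_mul_betaKernel_sq_div_add_sq ha p q (hs_pos hξ)

end Substitution

lemma integral_Ioo_betaKernel {p q : ℝ} (hp : 0 < p) (hq : 0 < q) :
    ∫ t in Set.Ioo (0 : ℝ) 1, t ^ (p - 1) * (1 - t) ^ (q - 1) = ProbabilityTheory.beta p q := by
  have h_ofReal : Complex.betaIntegral p q =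
      ((∫ t in Set.Ioo (0 : ℝ) 1, t ^ (p - 1) * (1 - t) ^ (q - 1) : ℝ) : ℂ) := by
    rw [Complex.betaIntegral, intervalIntegral.integral_of_le zero_le_one,
      integral_Ioc_eq_integral_Ioo, ← integral_complex_ofReal]
    refine setIntegral_congr_fun measurableSet_Ioo fun t ht => ?_
    simp [Complex.ofReal_cpow ht.1.le, Complex.ofReal_cpow (sub_nonneg.2 ht.2.le)]
  rw [ProbabilityTheory.beta_eq_betaIntegralReal p q hp hq, h_ofReal, Complex.ofReal_re]

lemma regIncompleteBeta_eq_setIntegral_div_beta (p q : ℝ) {x : ℝ} (hx : 0 ≤ x) :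
    regIncompleteBeta p q x =
      (∫ t in Set.Ioc 0 x, t ^ (p - 1) * (1 - t) ^ (q - 1)) / ProbabilityTheory.beta p q := by
  rw [regIncompleteBeta, intervalIntegral.integral_of_le hx, ProbabilityTheory.beta]

section PolarCoordinates

open Module

variable (E : Type*) [NormedAddCommGroup E] [InnerProductSpace ℝ E] [FiniteDimensional ℝ E]
  [MeasurableSpace E] [BorelSpace E] [Nontrivial E]

lemma finrank_mul_volume_real_unit_ball :
    finrank ℝ E * volume.real (Metric.ball (0 : E) 1) =
      2 * Real.pi ^ ((finrank ℝ E : ℝ) / 2) / Real.Gamma ((finrank ℝ E : ℝ) / 2) := by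
  have h_dim : (0 : ℝ) < finrank ℝ E := mod_cast finrank_pos
  have h_sqrt : √Real.pi ^ finrank ℝ E = Real.pi ^ ((finrank ℝ E : ℝ) / 2) := by
    rw [Real.sqrt_eq_rpow, ← Real.rpow_mul_natCast Real.pi_pos.le]
    ring_nf
  rw [Measure.real, InnerProductSpace.volume_ball, ENNReal.ofReal_one, one_pow, one_mul, h_sqrt,
    Real.Gamma_add_one (by positivity), ENNReal.toReal_ofReal (by positivity)]
  field_simp

lemma integral_fun_norm_eq_setIntegral_Ioi {F : Type*} [NormedAddCommGroup F] [NormedSpace ℝ F]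
    (f : ℝ → F) :
    ∫ x : E, f ‖x‖ =
      (2 * Real.pi ^ ((finrank ℝ E : ℝ) / 2) / Real.Gamma ((finrank ℝ E : ℝ) / 2)) •
        ∫ ξ in Set.Ioi (0 : ℝ), ξ ^ (finrank ℝ E - 1) • f ξ := by
  rw [integral_fun_norm_addHaar volume f, ← finrank_mul_volume_real_unit_ball E, mul_smul,
    Nat.cast_smul_eq_nsmul]

end PolarCoordinates

lemma setIntegral_pow_mul_maternSpectralDensity {d : ℕ} (hd : 1 ≤ d) {ν ρ : ℝ} (hν : 0 < ν)
    (hρ : ρ ≠ 0) (σ : ℝ) {s : Set ℝ} (hs : MeasurableSet s) (hs_pos : s ⊆ Set.Ioi 0) :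
    2 * Real.pi ^ ((d : ℝ) / 2) / Real.Gamma ((d : ℝ) / 2) *
        ∫ ξ in s, ξ ^ (d - 1) * maternSpectralDensity d ν ρ σ ξ
      = (2 * Real.pi) ^ d * σ ^ 2 *
        ((∫ t in (fun ξ : ℝ => ξ ^ 2 / (4 * ν / ρ ^ 2 + ξ ^ 2)) '' s,
          t ^ ((d : ℝ) / 2 - 1) * (1 - t) ^ (ν - 1)) / ProbabilityTheory.beta ((d : ℝ) / 2) ν) := by
  have h_pow (ξ : ℝ) : ξ ^ (d - 1) = ξ ^ (2 * ((d : ℝ) / 2) - 1) := by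
    rw [← Real.rpow_natCast, Nat.cast_sub hd, mul_div_cancel₀ _ two_ne_zero, Nat.cast_one]
  have h_pi : Real.pi ^ d = Real.pi ^ ((d : ℝ) / 2) * Real.pi ^ ((d : ℝ) / 2) := by
    rw [← Real.rpow_add Real.pi_pos, add_halves, Real.rpow_natCast]
  have h_const (ξ : ℝ) : ξ ^ (d - 1) * maternSpectralDensity d ν ρ σ ξ =
      σ ^ 2 * 2 ^ d * Real.pi ^ ((d : ℝ) / 2) * (Real.Gamma (ν + (d : ℝ) / 2) / Real.Gamma ν) *
        (4 * ν / ρ ^ 2) ^ ν *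
        (ξ ^ (2 * ((d : ℝ) / 2) - 1) * (4 * ν / ρ ^ 2 + ξ ^ 2) ^ (-ν - (d : ℝ) / 2)) := by
    rw [h_pow, maternSpectralDensity]
    ring
  simp_rw [h_const]
  rw [integral_const_mul, setIntegral_image_betaKernel (by positivity) _ _ hs hs_pos, mul_pow, h_pi,
    ProbabilityTheory.beta, add_comm ν]
  field_simp

theorem statement2_general (E : Type*) [NormedAddCommGroup E] [InnerProductSpace ℝ E]
    [FiniteDimensional ℝ E] [MeasurableSpace E] [BorelSpace E] [Nontrivial E] {d : ℕ}
    (hd : Module.finrank ℝ E = d) {ν ρ σ : ℝ} (hν : 0 < ν) (hρ : ρ ≠ 0) (hσ : σ ≠ 0) :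
    (∫ k : E, maternSpectralDensity d ν ρ σ ‖k‖) = (2 * Real.pi) ^ d * σ ^ 2 ∧
      ∀ r : ℝ, 0 ≤ r →
        2 * Real.pi ^ ((d : ℝ) / 2) / ((2 * Real.pi) ^ d * σ ^ 2 * Real.Gamma ((d : ℝ) / 2)) *
            ∫ ξ in (0:ℝ)..r, ξ ^ (d - 1) * maternSpectralDensity d ν ρ σ ξ
          = regIncompleteBeta ((d : ℝ) / 2) ν (r ^ 2 / (4 * ν / ρ ^ 2 + r ^ 2)) := by
  have hd_pos : 1 ≤ d := hd ▸ Module.finrank_pos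
  have h_half : 0 < (d : ℝ) / 2 := by positivity
  have ha : 0 < 4 * ν / ρ ^ 2 := by positivity
  constructor
  · rw [integral_fun_norm_eq_setIntegral_Ioi, hd]
    simp only [smul_eq_mul]
    rw [setIntegral_pow_mul_maternSpectralDensity hd_pos hν hρ σ measurableSet_Ioi subset_rfl,
      image_sq_div_add_sq_Ioi ha, integral_Ioo_betaKernel h_half hν,
      div_self (ProbabilityTheory.beta_pos h_half hν).ne', mul_one]
  · intro r hr
    have h_mass : (2 * Real.pi) ^ d * σ ^ 2 ≠ 0 := by positivity
    rw [div_mul_eq_div_div_swap, div_mul_eq_mul_div, intervalIntegral.integral_of_le hr,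
      setIntegral_pow_mul_maternSpectralDensity hd_pos hν hρ σ measurableSet_Ioc
        Set.Ioc_subset_Ioi_self,
      image_sq_div_add_sq_Ioc ha hr, mul_div_cancel_left₀ _ h_mass,
      regIncompleteBeta_eq_setIntegral_div_beta _ _ (by positivity)]

/-- (i) The total integral of the Matérn spectral density on `ℝ^d` is `(2π)^d σ²`, and
(ii) its normalized radial cumulative distribution function equals the regularized
incomplete beta function `I_{r²/(4ν/ρ² + r²)}(d/2, ν)`. -/
theorem statement2 (d : ℕ) (hd : 1 ≤ d) (ν ρ σ : ℝ) (hν : 0 < ν) (hρ : 0 < ρ) (hσ : 0 < σ) :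
    (∫ k : EuclideanSpace ℝ (Fin d), maternSpectralDensity d ν ρ σ ‖k‖)
        = (2 * Real.pi) ^ d * σ ^ 2 ∧
      ∀ r : ℝ, 0 ≤ r →
        2 * Real.pi ^ ((d : ℝ) / 2) / ((2 * Real.pi) ^ d * σ ^ 2 * Real.Gamma ((d : ℝ) / 2)) *
            ∫ ξ in (0:ℝ)..r, ξ ^ (d - 1) * maternSpectralDensity d ν ρ σ ξ
          = regIncompleteBeta ((d : ℝ) / 2) ν (r ^ 2 / (4 * ν / ρ ^ 2 + r ^ 2)) := by
  have : Nonempty (Fin d) := ⟨⟨0, hd⟩⟩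
  exact statement2_general _ finrank_euclideanSpace_fin hν hρ.ne' hσ.ne'
end

section
/- Let d ≥ 1 be an integer and L > 0. Let C⁰ : ℝ^d → ℂ, C¹₁, …, C¹_d : ℝ^d → ℂ and θ₁, …, θ_d : ℝ^d → ℂ all be continuous and L-periodic in each coordinate, and define G : ℝ^d × ℝ^d → ℂ by G(x,y) = C⁰(x-y) + Σ_{j=1}^d C¹_j(x-y)(θ_j(x) - θ_j(y)). Then for all m, n ∈ ℤ^d: if m + n ≠ 0 then Ĝ(m,n) = Σ_{j=1}^d θ̂_j(m+n) (Ĉ¹_j(-n) - Ĉ¹_j(m)), while Ĝ(m,-m) = Ĉ⁰(m). -/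
open MeasureTheory

/-- A function on `ℝ^d` is `L`-periodic in each coordinate. -/
def PeriodicEach (d : ℕ) (L : ℝ) (h : (Fin d → ℝ) → ℂ) : Prop :=
  ∀ (x : Fin d → ℝ) (j : Fin d), h (Function.update x j (x j + L)) = h x

/-- The `m`-th Fourier coefficient of an `L`-periodic function on `ℝ^d`:
`ĥ(m) = L^{-d} ∫_{[0,L)^d} h(x) e^{-2πi m·x/L} dx`. -/
noncomputable def fCoef (d : ℕ) (L : ℝ) (h : (Fin d → ℝ) → ℂ) (m : Fin d → ℤ) : ℂ :=
  (1 / (L : ℂ) ^ d) *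
    ∫ x in Set.univ.pi fun _ : Fin d => Set.Ico (0:ℝ) L,
      h x * Complex.exp (-(2 * (Real.pi : ℂ) * Complex.I *
        (∑ j, (m j : ℂ) * (x j : ℂ)) / (L : ℂ)))

/-- The `(m,n)`-th Fourier coefficient of an `L`-periodic function on `ℝ^d × ℝ^d`:
`Ĝ(m,n) = L^{-2d} ∫∫_{[0,L)^d × [0,L)^d} G(x,y) e^{-2πi (m·x + n·y)/L} dx dy`. -/
noncomputable def fCoef2 (d : ℕ) (L : ℝ) (G : (Fin d → ℝ) → (Fin d → ℝ) → ℂ)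
    (m n : Fin d → ℤ) : ℂ :=
  (1 / (L : ℂ) ^ (2 * d)) *
    ∫ x in Set.univ.pi fun _ : Fin d => Set.Ico (0:ℝ) L,
      ∫ y in Set.univ.pi fun _ : Fin d => Set.Ico (0:ℝ) L,
        G x y * Complex.exp (-(2 * (Real.pi : ℂ) * Complex.I *
          ((∑ j, (m j : ℂ) * (x j : ℂ)) + ∑ j, (n j : ℂ) * (y j : ℂ)) / (L : ℂ)))

/-!
Write `e_k(x) = exp(-2πi k·x/L)`. Since `e_m(x) e_n(y) = e_{m+n}(x) e_{-n}(x-y)`, Fubini and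
translation invariance over a period factor the double Fourier coefficient of `θ(x) C(x-y)` as
`θ̂(m+n) Ĉ(-n)`; exchanging `x` and `y` turns `θ(y) C(x-y)` into a kernel of the same kind, with
coefficient `θ̂(m+n) Ĉ(m)`. The first-order terms are differences of the two, and `C⁰(x-y)` is the
case `θ = 1`, whose Fourier coefficients vanish away from frequency `0`.
-/

section Lattice

variable {ι E F : Type*}

theorem periodic_of_mem_span_int [AddCommGroup E] {b : ι → E} {f : E → F}
    (hf : ∀ i, Function.Periodic f (b i)) {v : E}
    (hv : v ∈ Submodule.span ℤ (Set.range b)) : Function.Periodic f v := by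
  induction hv using Submodule.span_induction with
  | mem v hv =>
    obtain ⟨i, rfl⟩ := hv
    exact hf i
  | zero => exact Function.periodic_with_period_zero f
  | add v w _ _ hv hw => exact hv.add_period hw
  | smul k v _ hv => exact hv.zsmul k

variable [NormedAddCommGroup E] [NormedSpace ℝ E] [MeasurableSpace E] [BorelSpace E] [Finite ι]
  (b : Module.Basis ι ℝ E) (μ : Measure E) [μ.IsAddLeftInvariant] [μ.IsNegInvariant]

theorem isAddFundamentalDomain_preimage_sub_left (a : E) :
    IsAddFundamentalDomain (Submodule.span ℤ (Set.range b)).toAddSubgroup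
      ((a - ·) ⁻¹' ZSpan.fundamentalDomain b) μ := by
  have : FiniteDimensional ℝ E := b.finiteDimensional_of_finite
  refine (ZSpan.isAddFundamentalDomain' b μ).preimage_of_equiv
    (μ.measurePreserving_sub_left a).quasiMeasurePreserving (Equiv.neg _).bijective
    fun v x => ?_
  simp only [Equiv.neg_apply, AddSubgroup.vadd_def, AddSubgroup.coe_neg, vadd_eq_add]
  abel

variable [NormedAddCommGroup F] [NormedSpace ℝ F] {f : E → F}

theorem setIntegral_fundamentalDomain_comp_sub_left (hf : ∀ i, Function.Periodic f (b i)) (a : E) :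
    ∫ x in ZSpan.fundamentalDomain b, f (a - x) ∂μ = ∫ x in ZSpan.fundamentalDomain b, f x ∂μ := by
  have : FiniteDimensional ℝ E := b.finiteDimensional_of_finite
  have : Countable (Submodule.span ℤ (Set.range b)).toAddSubgroup :=
    inferInstanceAs (Countable (Submodule.span ℤ (Set.range b)))
  have preimage_preimage :
      (a - ·) ⁻¹' ((a - ·) ⁻¹' ZSpan.fundamentalDomain b) = ZSpan.fundamentalDomain b := by
    simp only [Set.preimage_preimage, sub_sub_cancel, Set.preimage_id']
  calc ∫ x in ZSpan.fundamentalDomain b, f (a - x) ∂μ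
    _ = ∫ x in (a - ·) ⁻¹' ZSpan.fundamentalDomain b, f x ∂μ := by
      conv_lhs => rw [← preimage_preimage]
      exact (μ.measurePreserving_sub_left a).setIntegral_preimage_emb
        (MeasurableEquiv.subLeft a).measurableEmbedding f _
    _ = ∫ x in ZSpan.fundamentalDomain b, f x ∂μ :=
      (isAddFundamentalDomain_preimage_sub_left b μ a).setIntegral_eq
        (ZSpan.isAddFundamentalDomain' b μ) fun v x => by
          rw [AddSubgroup.vadd_def, vadd_eq_add, add_comm]
          exact periodic_of_mem_span_int hf v.2 x

end Lattice

section Integrability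

open scoped Pointwise

theorem locallyIntegrable_comp_neg {E F : Type*} [AddGroup E] [TopologicalSpace E]
    [ContinuousNeg E] [MeasurableSpace E] [BorelSpace E] {μ : Measure E} [μ.IsNegInvariant]
    [NormedAddCommGroup F] {f : E → F} (hf : LocallyIntegrable f μ) :
    LocallyIntegrable (fun x => f (-x)) μ := by
  refine (locallyIntegrable_map_homeomorph (Homeomorph.neg E)).1 ?_
  rwa [Homeomorph.coe_neg, Measure.map_neg_eq_self]

variable {E A : Type*} [NormedAddCommGroup E] [NormedSpace ℝ E] [FiniteDimensional ℝ E]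
  [MeasurableSpace E] [BorelSpace E] {μ : Measure E} [μ.IsAddHaarMeasure]
  [NormedRing A] [NormedAlgebra ℝ A] {f g : E → A} {s : Set E}

theorem integrable_snd_mul_comp_sub (hs : Bornology.IsBounded s) (hsm : MeasurableSet s)
    (hg : IntegrableOn g s μ) (hf : LocallyIntegrable f μ) :
    Integrable (fun z : E × E => g z.2 * f (z.1 - z.2)) ((μ.restrict s).prod (μ.restrict s)) := by
  have : ProperSpace E := FiniteDimensional.proper ℝ E
  -- On `s × s` the differences stay in a compact set, so `f` may be cut off to be integrable.
  set K := closure (s - s)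
  have hK : IsCompact K := (isBounded_sub hs hs).isCompact_closure
  have truncated : Integrable
      (fun z : E × E => s.indicator g z.2 * K.indicator f (z.1 - z.2)) (μ.prod μ) :=
    (hg.integrable_indicator hsm).convolution_integrand (ContinuousLinearMap.mul ℝ A)
      ((hf.integrableOn_isCompact hK).integrable_indicator isClosed_closure.measurableSet)
  rw [Measure.prod_restrict]
  refine IntegrableOn.congr_fun truncated.integrableOn (fun z hz => ?_) (hsm.prod hsm)
  have hsub : z.1 - z.2 ∈ K := subset_closure (Set.sub_mem_sub hz.1 hz.2)
  simp only [Set.indicator_of_mem hz.2, Set.indicator_of_mem hsub]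

theorem integrable_fst_mul_comp_sub (hs : Bornology.IsBounded s) (hsm : MeasurableSet s)
    (hg : IntegrableOn g s μ) (hf : LocallyIntegrable f μ) :
    Integrable (fun z : E × E => g z.1 * f (z.1 - z.2)) ((μ.restrict s).prod (μ.restrict s)) := by
  simpa only [Function.comp_def, Prod.fst_swap, Prod.snd_swap, neg_sub] using
    (integrable_snd_mul_comp_sub hs hsm hg (locallyIntegrable_comp_neg hf)).swap

end Integrability

/-- The period cell `[0, L)^d` over which Fourier coefficients are computed. -/
abbrev periodCell (d : ℕ) (L : ℝ) : Set (Fin d → ℝ) :=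
  Set.univ.pi fun _ => Set.Ico 0 L

/-- Lebesgue measure on the period cell, not normalized: its total mass is `L ^ d`. -/
noncomputable abbrev cellMeasure (d : ℕ) (L : ℝ) : Measure (Fin d → ℝ) :=
  volume.restrict (periodCell d L)

/-- Integrability over a period cell in both variables, so that Fubini applies to `fCoef2`. -/
def CellIntegrable (d : ℕ) (L : ℝ) (G : (Fin d → ℝ) → (Fin d → ℝ) → ℂ) : Prop :=
  Integrable (Function.uncurry G) ((cellMeasure d L).prod (cellMeasure d L))

section PeriodCell

variable {d : ℕ} {L : ℝ}

theorem measurableSet_periodCell : MeasurableSet (periodCell d L) :=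
  MeasurableSet.univ_pi fun _ => measurableSet_Ico

theorem isBounded_periodCell : Bornology.IsBounded (periodCell d L) :=
  Bornology.IsBounded.pi fun _ => Metric.isBounded_Ico 0 L

theorem integral_one_cellMeasure (hL : 0 ≤ L) : ∫ _, (1 : ℂ) ∂cellMeasure d L = (L : ℂ) ^ d := by
  rw [setIntegral_const, Measure.real, Real.volume_pi_Ico_toReal fun _ => hL]
  simp

theorem integrableOn_periodCell {f : (Fin d → ℝ) → ℂ} (hf : LocallyIntegrable f) :
    IntegrableOn f (periodCell d L) :=
  (hf.integrableOn_isCompact isBounded_periodCell.isCompact_closure).mono_set subset_closure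

theorem cellIntegrable_fst_mul_comp_sub {f g : (Fin d → ℝ) → ℂ}
    (hg : IntegrableOn g (periodCell d L)) (hf : LocallyIntegrable f) :
    CellIntegrable d L fun x y => g x * f (x - y) :=
  integrable_fst_mul_comp_sub isBounded_periodCell measurableSet_periodCell hg hf

theorem cellIntegrable_snd_mul_comp_sub {f g : (Fin d → ℝ) → ℂ}
    (hg : IntegrableOn g (periodCell d L)) (hf : LocallyIntegrable f) :
    CellIntegrable d L fun x y => g y * f (x - y) :=
  integrable_snd_mul_comp_sub isBounded_periodCell measurableSet_periodCell hg hf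

theorem cellIntegrable_comp_sub {f : (Fin d → ℝ) → ℂ} (hf : LocallyIntegrable f) :
    CellIntegrable d L fun x y => f (x - y) := by
  simpa only [one_mul] using
    cellIntegrable_fst_mul_comp_sub (integrableOn_periodCell (locallyIntegrable_const 1)) hf

theorem CellIntegrable.sub {G H : (Fin d → ℝ) → (Fin d → ℝ) → ℂ} (hG : CellIntegrable d L G)
    (hH : CellIntegrable d L H) : CellIntegrable d L fun x y => G x y - H x y :=
  Integrable.sub hG hH

theorem CellIntegrable.sum {ι : Type*} {s : Finset ι} {G : ι → (Fin d → ℝ) → (Fin d → ℝ) → ℂ}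
    (hG : ∀ i ∈ s, CellIntegrable d L (G i)) : CellIntegrable d L fun x y => ∑ i ∈ s, G i x y :=
  integrable_finsetSum s hG

theorem exists_basis_fundamentalDomain_eq_periodCell (d : ℕ) (hL : 0 < L) :
    ∃ b : Module.Basis (Fin d) ℝ (Fin d → ℝ),
      (∀ j, b j = Pi.single j L) ∧ ZSpan.fundamentalDomain b = periodCell d L := by
  refine ⟨(Pi.basisFun ℝ (Fin d)).isUnitSMul (w := fun _ => L) fun _ => hL.ne'.isUnit,
    fun j => ?_, ?_⟩
  · simp [Module.Basis.isUnitSMul_apply, ← Pi.single_smul']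
  · ext x
    simp [ZSpan.mem_fundamentalDomain, Module.Basis.repr_isUnitSMul, Units.smul_def,
      inv_mul_lt_iff₀ hL, mul_nonneg_iff_of_pos_left, hL]

theorem periodicEach_iff_periodic_single {h : (Fin d → ℝ) → ℂ} :
    PeriodicEach d L h ↔ ∀ j, Function.Periodic h (Pi.single j L) := by
  have update_eq (x : Fin d → ℝ) (j : Fin d) :
      Function.update x j (x j + L) = x + Pi.single j L := by
    ext i
    obtain rfl | hi := eq_or_ne i j <;> simp [*]
  simp only [PeriodicEach, Function.Periodic, update_eq]
  exact forall_comm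

theorem PeriodicEach.mul {f g : (Fin d → ℝ) → ℂ} (hf : PeriodicEach d L f)
    (hg : PeriodicEach d L g) : PeriodicEach d L (fun x => f x * g x) :=
  fun x j => congrArg₂ (· * ·) (hf x j) (hg x j)

theorem PeriodicEach.comp_neg {f : (Fin d → ℝ) → ℂ} (hf : PeriodicEach d L f) :
    PeriodicEach d L (fun x => f (-x)) := by
  rw [periodicEach_iff_periodic_single] at hf ⊢
  intro j x
  simp only [neg_add', (hf j).sub_eq]

theorem PeriodicEach.integral_comp_sub_left {f : (Fin d → ℝ) → ℂ} (hf : PeriodicEach d L f)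
    (hL : 0 < L) (a : Fin d → ℝ) :
    ∫ x, f (a - x) ∂cellMeasure d L = ∫ x, f x ∂cellMeasure d L := by
  obtain ⟨b, hb, cell_eq⟩ := exists_basis_fundamentalDomain_eq_periodCell d hL
  rw [cellMeasure, ← cell_eq]
  refine setIntegral_fundamentalDomain_comp_sub_left b volume (fun j => ?_) a
  rw [hb]
  exact periodicEach_iff_periodic_single.1 hf j

theorem PeriodicEach.integral_comp_neg {f : (Fin d → ℝ) → ℂ} (hf : PeriodicEach d L f)
    (hL : 0 < L) : ∫ x, f (-x) ∂cellMeasure d L = ∫ x, f x ∂cellMeasure d L := by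
  simpa only [zero_sub] using hf.integral_comp_sub_left hL 0

end PeriodCell

/-- The character `x ↦ e^{-2πi k·x/L}`, with the sign it carries in Fourier coefficients. -/
noncomputable def torusChar {d : ℕ} (L : ℝ) (k : Fin d → ℤ) (x : Fin d → ℝ) : ℂ :=
  Complex.exp (-(2 * (Real.pi : ℂ) * Complex.I * (∑ j, (k j : ℂ) * (x j : ℂ)) / (L : ℂ)))

section Character

variable {d : ℕ} {L : ℝ} (k l : Fin d → ℤ) (x y : Fin d → ℝ)

theorem continuous_torusChar : Continuous (torusChar L k) := by
  unfold torusChar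
  fun_prop

theorem norm_torusChar : ‖torusChar L k x‖ = 1 := by
  have exponent_eq : -(2 * (Real.pi : ℂ) * Complex.I * (∑ j, (k j : ℂ) * (x j : ℂ)) / (L : ℂ)) =
      ((-(2 * Real.pi * (∑ j, k j * x j) / L) : ℝ) : ℂ) * Complex.I := by
    push_cast
    ring
  rw [torusChar, exponent_eq, Complex.norm_exp_ofReal_mul_I]

theorem torusChar_zero : torusChar L 0 x = 1 := by
  simp [torusChar]

theorem torusChar_add : torusChar L k (x + y) = torusChar L k x * torusChar L k y := by
  simp only [torusChar, ← Complex.exp_add, Pi.add_apply, Complex.ofReal_add, mul_add,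
    Finset.sum_add_distrib, add_div, neg_add]

theorem torusChar_add_freq : torusChar L (k + l) x = torusChar L k x * torusChar L l x := by
  simp only [torusChar, ← Complex.exp_add, Pi.add_apply, Int.cast_add, add_mul, mul_add,
    Finset.sum_add_distrib, add_div, neg_add]

theorem torusChar_neg : torusChar L k (-x) = torusChar L (-k) x := by
  simp [torusChar]

theorem torusChar_mul_torusChar :
    torusChar L k x * torusChar L l y = torusChar L (k + l) x * torusChar L (-l) (x - y) := by
  have cancel : torusChar L l x * torusChar L (-l) x = 1 := by
    rw [← torusChar_add_freq, add_neg_cancel, torusChar_zero]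
  rw [sub_eq_add_neg, torusChar_add, torusChar_neg, neg_neg, torusChar_add_freq]
  linear_combination -(torusChar L k x * torusChar L l y) * cancel

theorem torusChar_single (j : Fin d) (a : ℝ) :
    torusChar L k (Pi.single j a) =
      Complex.exp (-(2 * (Real.pi : ℂ) * Complex.I * ((k j : ℂ) * (a : ℂ)) / (L : ℂ))) := by
  rw [torusChar, Finset.sum_eq_single j (fun i _ hi => by simp [hi]) (by simp), Pi.single_eq_same]

theorem periodicEach_torusChar (hL : L ≠ 0) : PeriodicEach d L (torusChar L k) := by
  rw [periodicEach_iff_periodic_single]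
  intro j x
  have hL' : (L : ℂ) ≠ 0 := Complex.ofReal_ne_zero.2 hL
  have exponent_eq : -(2 * (Real.pi : ℂ) * Complex.I * ((k j : ℂ) * (L : ℂ)) / (L : ℂ)) =
      ((-k j : ℤ) : ℂ) * (2 * Real.pi * Complex.I) := by
    push_cast
    field_simp
  rw [torusChar_add, torusChar_single, exponent_eq, Complex.exp_int_mul_two_pi_mul_I, mul_one]

variable {k} in
theorem exists_torusChar_eq_neg_one (hL : L ≠ 0) (hk : k ≠ 0) :
    ∃ a, torusChar L k a = -1 := by
  obtain ⟨j, hj⟩ := Function.ne_iff.1 hk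
  have hj' : (k j : ℂ) ≠ 0 := Int.cast_ne_zero.2 hj
  have hL' : (L : ℂ) ≠ 0 := Complex.ofReal_ne_zero.2 hL
  refine ⟨Pi.single j (-(L / (2 * k j))), ?_⟩
  rw [torusChar_single, ← Complex.exp_pi_mul_I]
  congr 1
  push_cast
  field_simp

variable {k} in
theorem integral_torusChar_eq_zero (hL : 0 < L) (hk : k ≠ 0) :
    ∫ x, torusChar L k x ∂cellMeasure d L = 0 := by
  have periodic := periodicEach_torusChar (d := d) k hL.ne'
  obtain ⟨a, ha⟩ := exists_torusChar_eq_neg_one hL.ne' hk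
  have eq_neg_self : ∫ x, torusChar L k x ∂cellMeasure d L =
      -∫ x, torusChar L k x ∂cellMeasure d L := by
    calc ∫ x, torusChar L k x ∂cellMeasure d L
      _ = ∫ x, torusChar L k (a - x) ∂cellMeasure d L := (periodic.integral_comp_sub_left hL a).symm
      _ = -∫ x, torusChar L k (-x) ∂cellMeasure d L := by
        simp only [sub_eq_add_neg, torusChar_add, ha, neg_one_mul, integral_neg]
      _ = -∫ x, torusChar L k x ∂cellMeasure d L := by rw [periodic.integral_comp_neg hL]
  exact self_eq_neg.1 eq_neg_self

end Character

section FourierCoefficients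

variable {d : ℕ} {L : ℝ}

theorem fCoef_eq_integral_torusChar (h : (Fin d → ℝ) → ℂ) (k : Fin d → ℤ) :
    fCoef d L h k = 1 / (L : ℂ) ^ d * ∫ x, h x * torusChar L k x ∂cellMeasure d L :=
  rfl

theorem fCoef_one (hL : 0 < L) (k : Fin d → ℤ) :
    fCoef d L (fun _ => 1) k = if k = 0 then 1 else 0 := by
  simp only [fCoef_eq_integral_torusChar, one_mul]
  split_ifs with hk
  · have hL' : (L : ℂ) ≠ 0 := Complex.ofReal_ne_zero.2 hL.ne'
    simp only [hk, torusChar_zero]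
    rw [integral_one_cellMeasure hL.le, one_div_mul_cancel (pow_ne_zero d hL')]
  · rw [integral_torusChar_eq_zero hL hk, mul_zero]

theorem fCoef_comp_neg (hL : 0 < L) {C : (Fin d → ℝ) → ℂ} (hC : PeriodicEach d L C)
    (k : Fin d → ℤ) : fCoef d L (fun x => C (-x)) k = fCoef d L C (-k) := by
  have periodic := hC.mul (periodicEach_torusChar (-k) hL.ne')
  simp only [fCoef_eq_integral_torusChar, ← periodic.integral_comp_neg hL, torusChar_neg, neg_neg]

variable {G H : (Fin d → ℝ) → (Fin d → ℝ) → ℂ} (m n : Fin d → ℤ)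

theorem fCoef2_eq_integral_torusChar (G : (Fin d → ℝ) → (Fin d → ℝ) → ℂ) :
    fCoef2 d L G m n = 1 / (L : ℂ) ^ (2 * d) *
      ∫ x, ∫ y, G x y * (torusChar L m x * torusChar L n y) ∂cellMeasure d L ∂cellMeasure d L := by
  simp only [fCoef2, torusChar, ← Complex.exp_add, mul_add, add_div, neg_add]

theorem CellIntegrable.mul_torusChar (hG : CellIntegrable d L G) :
    CellIntegrable d L fun x y => G x y * (torusChar L m x * torusChar L n y) := by
  refine Integrable.mul_bdd (c := 1) hG (Continuous.aestronglyMeasurable ?_)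
    (.of_forall fun z => ?_)
  · exact ((continuous_torusChar m).comp continuous_fst).mul
      ((continuous_torusChar n).comp continuous_snd)
  · rw [norm_mul, norm_torusChar, norm_torusChar, mul_one]

theorem fCoef2_add (hG : CellIntegrable d L G) (hH : CellIntegrable d L H) :
    fCoef2 d L (fun x y => G x y + H x y) m n = fCoef2 d L G m n + fCoef2 d L H m n := by
  simp only [fCoef2_eq_integral_torusChar, add_mul, ← mul_add]
  exact congrArg _ (integral_integral_add (hG.mul_torusChar m n) (hH.mul_torusChar m n))

theorem fCoef2_sub (hG : CellIntegrable d L G) (hH : CellIntegrable d L H) :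
    fCoef2 d L (fun x y => G x y - H x y) m n = fCoef2 d L G m n - fCoef2 d L H m n := by
  simp only [fCoef2_eq_integral_torusChar, sub_mul, ← mul_sub]
  exact congrArg _ (integral_integral_sub (hG.mul_torusChar m n) (hH.mul_torusChar m n))

theorem fCoef2_sum {ι : Type*} (s : Finset ι) {G : ι → (Fin d → ℝ) → (Fin d → ℝ) → ℂ}
    (hG : ∀ i ∈ s, CellIntegrable d L (G i)) :
    fCoef2 d L (fun x y => ∑ i ∈ s, G i x y) m n = ∑ i ∈ s, fCoef2 d L (G i) m n := by
  classical
  induction s using Finset.induction_on with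
  | empty => simp [fCoef2]
  | insert i s hi ih =>
    rw [Finset.forall_mem_insert] at hG
    simp only [Finset.sum_insert hi]
    rw [fCoef2_add m n hG.1 (CellIntegrable.sum hG.2), ih hG.2]

theorem fCoef2_swap (hG : CellIntegrable d L G) :
    fCoef2 d L (fun x y => G y x) m n = fCoef2 d L G n m := by
  rw [fCoef2_eq_integral_torusChar, fCoef2_eq_integral_torusChar,
    integral_integral_swap (hG.mul_torusChar n m)]
  simp only [mul_comm (torusChar L n _)]

variable {C θ : (Fin d → ℝ) → ℂ}

theorem fCoef2_fst_mul_comp_sub (hL : 0 < L) (hC : PeriodicEach d L C) (θ : (Fin d → ℝ) → ℂ) :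
    fCoef2 d L (fun x y => θ x * C (x - y)) m n = fCoef d L θ (m + n) * fCoef d L C (-n) := by
  have integrand_eq (x y : Fin d → ℝ) :
      θ x * C (x - y) * (torusChar L m x * torusChar L n y) =
        θ x * torusChar L (m + n) x * (C (x - y) * torusChar L (-n) (x - y)) := by
    rw [torusChar_mul_torusChar, mul_mul_mul_comm]
  have inner_integral (x : Fin d → ℝ) :
      ∫ y, C (x - y) * torusChar L (-n) (x - y) ∂cellMeasure d L =
        ∫ y, C y * torusChar L (-n) y ∂cellMeasure d L :=
    (hC.mul (periodicEach_torusChar (-n) hL.ne')).integral_comp_sub_left hL x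
  simp only [fCoef2_eq_integral_torusChar, fCoef_eq_integral_torusChar, integrand_eq,
    integral_const_mul, inner_integral, integral_mul_const]
  ring

theorem fCoef2_snd_mul_comp_sub (hL : 0 < L) (hC : PeriodicEach d L C)
    (hCi : LocallyIntegrable C) (hθ : IntegrableOn θ (periodCell d L)) :
    fCoef2 d L (fun x y => θ y * C (x - y)) m n = fCoef d L θ (m + n) * fCoef d L C m := by
  have integrable : CellIntegrable d L fun x y => θ x * C (-(x - y)) :=
    cellIntegrable_fst_mul_comp_sub hθ (locallyIntegrable_comp_neg hCi)
  calc fCoef2 d L (fun x y => θ y * C (x - y)) m n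
    _ = fCoef2 d L (fun x y => θ x * C (-(x - y))) n m := by
      simpa only [neg_sub] using fCoef2_swap m n integrable
    _ = fCoef d L θ (m + n) * fCoef d L C m := by
      rw [fCoef2_fst_mul_comp_sub n m hL hC.comp_neg θ, fCoef_comp_neg hL hC, neg_neg, add_comm]

theorem cellIntegrable_mul_sub (hC : LocallyIntegrable C) (hθ : IntegrableOn θ (periodCell d L)) :
    CellIntegrable d L fun x y => C (x - y) * (θ x - θ y) := by
  simpa only [sub_mul, mul_comm (C _)] using
    (cellIntegrable_fst_mul_comp_sub hθ hC).sub (cellIntegrable_snd_mul_comp_sub hθ hC)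

theorem fCoef2_comp_sub_mul_sub (hL : 0 < L) (hC : PeriodicEach d L C)
    (hCi : LocallyIntegrable C) (hθ : IntegrableOn θ (periodCell d L)) :
    fCoef2 d L (fun x y => C (x - y) * (θ x - θ y)) m n =
      fCoef d L θ (m + n) * (fCoef d L C (-n) - fCoef d L C m) := by
  simp only [mul_comm (C _), sub_mul]
  rw [fCoef2_sub m n (cellIntegrable_fst_mul_comp_sub hθ hCi)
      (cellIntegrable_snd_mul_comp_sub hθ hCi),
    fCoef2_fst_mul_comp_sub m n hL hC θ, fCoef2_snd_mul_comp_sub m n hL hC hCi hθ, mul_sub]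

theorem fCoef2_comp_sub (hL : 0 < L) (hC : PeriodicEach d L C) :
    fCoef2 d L (fun x y => C (x - y)) m n = if m + n = 0 then fCoef d L C (-n) else 0 := by
  simpa only [one_mul, fCoef_one hL, ite_mul, zero_mul] using
    fCoef2_fst_mul_comp_sub m n hL hC fun _ => 1

theorem statement6_general {d : ℕ} {L : ℝ} (hL : 0 < L) {ι : Type*} [Fintype ι]
    {C0 : (Fin d → ℝ) → ℂ} {C1 θ : ι → (Fin d → ℝ) → ℂ}
    (hC0i : LocallyIntegrable C0) (hC0p : PeriodicEach d L C0)
    (hC1i : ∀ j, LocallyIntegrable (C1 j)) (hC1p : ∀ j, PeriodicEach d L (C1 j))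
    (hθ : ∀ j, IntegrableOn (θ j) (periodCell d L))
    {G : (Fin d → ℝ) → (Fin d → ℝ) → ℂ}
    (hG : ∀ x y, G x y = C0 (x - y) + ∑ j, C1 j (x - y) * (θ j x - θ j y))
    (m n : Fin d → ℤ) :
    (m + n ≠ 0 →
        fCoef2 d L G m n =
          ∑ j, fCoef d L (θ j) (m + n) * (fCoef d L (C1 j) (-n) - fCoef d L (C1 j) m)) ∧
      fCoef2 d L G m (-m) = fCoef d L C0 m := by
  have expansion (n : Fin d → ℤ) : fCoef2 d L G m n =
      (if m + n = 0 then fCoef d L C0 (-n) else 0) +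
        ∑ j, fCoef d L (θ j) (m + n) * (fCoef d L (C1 j) (-n) - fCoef d L (C1 j) m) := by
    have integrable j : CellIntegrable d L fun x y => C1 j (x - y) * (θ j x - θ j y) :=
      cellIntegrable_mul_sub (hC1i j) (hθ j)
    obtain rfl : G = fun x y => C0 (x - y) + ∑ j, C1 j (x - y) * (θ j x - θ j y) :=
      funext₂ hG
    rw [fCoef2_add m n (cellIntegrable_comp_sub hC0i) (CellIntegrable.sum fun j _ => integrable j),
      fCoef2_comp_sub m n hL hC0p, fCoef2_sum m n _ fun j _ => integrable j]
    simp only [fun j => fCoef2_comp_sub_mul_sub m n hL (hC1p j) (hC1i j) (hθ j)]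
  refine ⟨fun hmn => ?_, ?_⟩
  · rw [expansion, if_neg hmn, zero_add]
  · simp only [expansion, add_neg_cancel, if_true, neg_neg, sub_self, mul_zero,
      Finset.sum_const_zero, add_zero]

end FourierCoefficients

/-- First-order expansion in Fourier space: for
`G(x,y) = C⁰(x-y) + Σ_j C¹_j(x-y)(θ_j(x) - θ_j(y))` with all ingredients continuous and
`L`-periodic in each coordinate, if `m + n ≠ 0` then
`Ĝ(m,n) = Σ_j θ̂_j(m+n)(Ĉ¹_j(-n) - Ĉ¹_j(m))`, while `Ĝ(m,-m) = Ĉ⁰(m)`. -/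
theorem statement6 (d : ℕ) (hd : 1 ≤ d) (L : ℝ) (hL : 0 < L)
    (C0 : (Fin d → ℝ) → ℂ) (C1 θ : Fin d → (Fin d → ℝ) → ℂ)
    (hC0c : Continuous C0) (hC0p : PeriodicEach d L C0)
    (hC1c : ∀ j, Continuous (C1 j)) (hC1p : ∀ j, PeriodicEach d L (C1 j))
    (hθc : ∀ j, Continuous (θ j)) (hθp : ∀ j, PeriodicEach d L (θ j))
    (G : (Fin d → ℝ) → (Fin d → ℝ) → ℂ)
    (hG : ∀ x y, G x y = C0 (x - y) + ∑ j, C1 j (x - y) * (θ j x - θ j y))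
    (m n : Fin d → ℤ) :
    (m + n ≠ 0 →
        fCoef2 d L G m n =
          ∑ j, fCoef d L (θ j) (m + n) * (fCoef d L (C1 j) (-n) - fCoef d L (C1 j) m)) ∧
      fCoef2 d L G m (-m) = fCoef d L C0 m :=
  statement6_general hL hC0c.locallyIntegrable hC0p (fun j => (hC1c j).locallyIntegrable) hC1p
    (fun j => integrableOn_periodCell (hθc j).locallyIntegrable) hG m n
end

section
/- Let d ≥ 1 be an integer, c₀ > 0 a real number, η : ℝ^d → ℝ^d a map, and A a real d × d matrix. Suppose there exist convex differentiable functions φ, ψ : ℝ^d → ℝ such that ∇φ(k) = k - c₀ Aᵀη(k) and ∇ψ(k) = k + c₀ Aᵀη(k) for all k ∈ ℝ^d. Then: (i) for every c ∈ [-c₀, c₀], the map T_c(k) = k + c Aᵀη(k) is the gradient of a convex differentiable function on ℝ^d; (ii) for every c with |c| < c₀, T_c satisfies ‖T_c(x) - T_c(y)‖ ≥ (1 - |c|/c₀) ‖x - y‖ for all x, y, and for every Borel measure μ on ℝ^d that is absolutely continuous with respect to Lebesgue measure, the pushforward of μ under T_c is absolutely continuous with respect to Lebesgue measure. -/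
open MeasureTheory

/-- The action of a `d × d` real matrix on a vector of `EuclideanSpace ℝ (Fin d)`. -/
noncomputable def matVec (d : ℕ) (A : Matrix (Fin d) (Fin d) ℝ)
    (v : EuclideanSpace ℝ (Fin d)) : EuclideanSpace ℝ (Fin d) :=
  (EuclideanSpace.equiv (Fin d) ℝ).symm (A.mulVec (EuclideanSpace.equiv (Fin d) ℝ v))

/-! Each map `id + c Aᵀη` lies on the straight path `S_t = (1 - t) id + t T`, at time
`t = |c| / c₀`, from the identity to one of the two convex gradients `T = id ± c₀ Aᵀη`. Such a path
consists of gradients of convex functions, because `id = ∇ (‖·‖² / 2)`. Since `T` is monotone,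
`⟪S_t x - S_t y, x - y⟫ ≥ (1 - t) ‖x - y‖²`; so for `t < 1` the map `S_t` has a Lipschitz inverse on
its range, and Lipschitz maps send null sets to null sets. -/

open Set AffineMap
open scoped ENNReal Gradient NNReal RealInnerProductSpace

theorem mul_norm_le_norm_of_mul_norm_sq_le_inner {E : Type*} [SeminormedAddCommGroup E]
    [InnerProductSpace ℝ E] {m : ℝ} {v w : E} (h : m * ‖v‖ ^ 2 ≤ ⟪w, v⟫) : m * ‖v‖ ≤ ‖w‖ := by
  rcases (norm_nonneg v).eq_or_lt with hv | hv
  · simp only [← hv, mul_zero, norm_nonneg]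
  · refine le_of_mul_le_mul_right ?_ hv
    calc m * ‖v‖ * ‖v‖ = m * ‖v‖ ^ 2 := by ring
      _ ≤ ⟪w, v⟫ := h
      _ ≤ ‖w‖ * ‖v‖ := real_inner_le_norm w v

theorem antilipschitzWith_of_mul_norm_sub_le {E F : Type*} [SeminormedAddCommGroup E]
    [SeminormedAddCommGroup F] {m : ℝ≥0} (hm : m ≠ 0) {T : E → F}
    (h : ∀ x y, m * ‖x - y‖ ≤ ‖T x - T y‖) : AntilipschitzWith m⁻¹ T :=
  AntilipschitzWith.of_le_mul_dist fun x y => by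
    rw [dist_eq_norm, dist_eq_norm, NNReal.coe_inv, inv_mul_eq_div,
      le_div_iff₀' (NNReal.coe_pos.2 (pos_iff_ne_zero.2 hm))]
    exact h x y

theorem map_absolutelyContinuous_hausdorffMeasure_of_antilipschitzWith {X Y : Type*}
    [EMetricSpace X] [MeasurableSpace X] [BorelSpace X]
    [EMetricSpace Y] [MeasurableSpace Y] [BorelSpace Y] {K : ℝ≥0} {T : X → Y} {s : ℝ}
    {μ : Measure X} (hT : AntilipschitzWith K T) (hTμ : AEMeasurable T μ) (hs : 0 ≤ s)
    (hμ : μ ≪ μH[s]) : μ.map T ≪ μH[s] := by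
  refine Measure.AbsolutelyContinuous.mk fun B hB hB₀ => ?_
  rw [Measure.map_apply_of_aemeasurable hTμ hB]
  refine hμ (nonpos_iff_eq_zero.1 ?_)
  calc μH[s] (T ⁻¹' B) ≤ (K : ℝ≥0∞) ^ s * μH[s] B := hT.hausdorffMeasure_preimage_le hs B
    _ = 0 := by rw [hB₀, mul_zero]

theorem map_absolutelyContinuous_addHaar_of_antilipschitzWith {E : Type*} [NormedAddCommGroup E]
    [NormedSpace ℝ E] [FiniteDimensional ℝ E] [MeasurableSpace E] [BorelSpace E]
    {ν : Measure E} [ν.IsAddHaarMeasure] {K : ℝ≥0} {T : E → E} {μ : Measure E}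
    (hT : AntilipschitzWith K T) (hTμ : AEMeasurable T μ) (hμ : μ ≪ ν) : μ.map T ≪ ν := by
  have hν : ν ≪ μH[Module.finrank ℝ E] := Measure.absolutelyContinuous_isAddHaarMeasure _ _
  have hH : μH[Module.finrank ℝ E] ≪ ν := Measure.absolutelyContinuous_isAddHaarMeasure _ _
  exact (map_absolutelyContinuous_hausdorffMeasure_of_antilipschitzWith hT hTμ
    (Nat.cast_nonneg _) (hμ.trans hν)).trans hH

/-- McCann's displacement interpolation `(1 - t) id + t T` at time `t`, from the identity at `t = 0`
to `T` at `t = 1`. -/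
def displacementInterpolation {E : Type*} [AddCommGroup E] [Module ℝ E] (T : E → E) (t : ℝ)
    (x : E) : E :=
  lineMap x (T x) t

theorem displacementInterpolation_id_add_smul {E : Type*} [AddCommGroup E] [Module ℝ E]
    (u : E → E) {a : ℝ} (ha : a ≠ 0) (c : ℝ) :
    displacementInterpolation (fun x => x + a • u x) (c / a) = fun x => x + c • u x := by
  ext x
  rw [displacementInterpolation, lineMap_apply, vsub_eq_sub, vadd_eq_add, add_sub_cancel_left,
    smul_smul, div_mul_cancel₀ c ha, add_comm]

/-- `T` is the gradient of a convex differentiable function on the whole space, hence an optimal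
transport map for the quadratic cost. Differentiability is part of `HasGradientAt`. -/
def IsConvexGradient {E : Type*} [NormedAddCommGroup E] [InnerProductSpace ℝ E] [CompleteSpace E]
    (T : E → E) : Prop :=
  ∃ f : E → ℝ, ConvexOn ℝ univ f ∧ ∀ x, HasGradientAt f (T x) x

namespace IsConvexGradient

variable {E : Type*} [NormedAddCommGroup E] [InnerProductSpace ℝ E] [CompleteSpace E]
  {S T : E → E} {t : ℝ}

theorem iff_exists_gradient_eq :
    IsConvexGradient T ↔
      ∃ f : E → ℝ, ConvexOn ℝ univ f ∧ Differentiable ℝ f ∧ ∀ x, ∇ f x = T x := by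
  refine exists_congr fun f => and_congr_right fun _ => ⟨fun h => ?_, fun ⟨hf, hfT⟩ x => ?_⟩
  · exact ⟨fun x => (h x).differentiableAt, fun x => (h x).gradient⟩
  · exact hfT x ▸ (hf x).hasGradientAt

protected theorem id : IsConvexGradient fun x : E => x := by
  refine ⟨fun x => (2⁻¹ : ℝ) • ‖x‖ ^ 2,
    (convexOn_univ_norm.pow (fun _ _ => norm_nonneg _) 2).smul (by norm_num), fun x => ?_⟩
  rw [hasGradientAt_iff_hasFDerivAt]
  have hderiv : InnerProductSpace.toDual ℝ E x = (2⁻¹ : ℝ) • (2 : ℕ) • innerSL ℝ x := by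
    ext y
    simp
  exact hderiv ▸ (hasStrictFDerivAt_norm_sq x).hasFDerivAt.const_smul (2⁻¹ : ℝ)

protected theorem add (hS : IsConvexGradient S) (hT : IsConvexGradient T) :
    IsConvexGradient fun x => S x + T x := by
  obtain ⟨f, hf, hfS⟩ := hS
  obtain ⟨g, hg, hgT⟩ := hT
  refine ⟨f + g, hf.add hg, fun x => ?_⟩
  rw [hasGradientAt_iff_hasFDerivAt, map_add]
  exact (hfS x).hasFDerivAt.add (hgT x).hasFDerivAt

protected theorem const_smul {a : ℝ} (ha : 0 ≤ a) (hT : IsConvexGradient T) :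
    IsConvexGradient fun x => a • T x := by
  obtain ⟨f, hf, hfT⟩ := hT
  refine ⟨fun x => a • f x, hf.smul ha, fun x => ?_⟩
  rw [hasGradientAt_iff_hasFDerivAt, map_smul]
  exact (hfT x).hasFDerivAt.const_smul a

theorem inner_sub_nonneg (hT : IsConvexGradient T) (x y : E) : 0 ≤ ⟪T x - T y, x - y⟫ := by
  obtain ⟨f, hf, hfT⟩ := hT
  have hderiv (t : ℝ) :
      HasDerivAt (f ∘ lineMap y x) ⟪T (lineMap y x t), x - y⟫ t :=
    (hfT _).hasFDerivAt.comp_hasDerivAt t hasDerivAt_lineMap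
  have hmono : MonotoneOn (deriv (f ∘ lineMap y x)) univ :=
    (hf.comp_affineMap (lineMap y x : ℝ →ᵃ[ℝ] E)).monotoneOn_deriv
      fun t _ => (hderiv t).differentiableAt
  have hle : ⟪T y, x - y⟫ ≤ ⟪T x, x - y⟫ := by
    simpa only [(hderiv _).deriv, lineMap_apply_zero, lineMap_apply_one] using
      hmono (mem_univ 0) (mem_univ 1) zero_le_one
  rwa [inner_sub_left, sub_nonneg]

protected theorem measurable [MeasurableSpace E] [BorelSpace E] (hT : IsConvexGradient T) :
    Measurable T := by
  obtain ⟨f, -, hfT⟩ := hT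
  rw [← gradient_eq hfT]
  exact (InnerProductSpace.toDual ℝ E).symm.continuous.measurable.comp (measurable_fderiv ℝ f)

protected theorem displacementInterpolation (hT : IsConvexGradient T) (ht : t ∈ Icc 0 1) :
    IsConvexGradient (displacementInterpolation T t) := by
  have h : IsConvexGradient fun x => (1 - t) • x + t • T x :=
    (IsConvexGradient.id.const_smul (sub_nonneg.2 ht.2)).add (hT.const_smul ht.1)
  simpa only [← lineMap_apply_module] using! h

theorem mul_norm_sub_le_norm_displacementInterpolation_sub (hT : IsConvexGradient T)
    (ht : 0 ≤ t) (x y : E) :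
    (1 - t) * ‖x - y‖ ≤
      ‖displacementInterpolation T t x - displacementInterpolation T t y‖ := by
  refine mul_norm_le_norm_of_mul_norm_sq_le_inner ?_
  calc (1 - t) * ‖x - y‖ ^ 2
      ≤ (1 - t) * ‖x - y‖ ^ 2 + t * ⟪T x - T y, x - y⟫ :=
        le_add_of_nonneg_right (mul_nonneg ht (hT.inner_sub_nonneg x y))
    _ = ⟪(1 - t) • (x - y) + t • (T x - T y), x - y⟫ := by
        rw [inner_add_left, real_inner_smul_left, real_inner_smul_left, real_inner_self_eq_norm_sq]
    _ = ⟪displacementInterpolation T t x - displacementInterpolation T t y, x - y⟫ := by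
        simp only [displacementInterpolation, lineMap_apply_module]
        congr 1
        module

theorem exists_displacementInterpolation_eq_id_add_smul {u : E → E} {c₀ : ℝ} (hc₀ : 0 < c₀)
    (hneg : IsConvexGradient fun x => x - c₀ • u x)
    (hpos : IsConvexGradient fun x => x + c₀ • u x) (c : ℝ) :
    ∃ T, IsConvexGradient T ∧
      displacementInterpolation T (|c| / c₀) = fun x => x + c • u x := by
  rcases le_total 0 c with hc | hc
  · exact ⟨_, hpos, by rw [abs_of_nonneg hc, displacementInterpolation_id_add_smul u hc₀.ne']⟩
  · simp only [sub_eq_add_neg, ← neg_smul] at hneg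
    refine ⟨_, hneg, ?_⟩
    rw [abs_of_nonpos hc, neg_div, ← div_neg,
      displacementInterpolation_id_add_smul u (neg_ne_zero.2 hc₀.ne')]

end IsConvexGradient

theorem IsConvexGradient.map_displacementInterpolation_absolutelyContinuous {E : Type*}
    [NormedAddCommGroup E] [InnerProductSpace ℝ E] [FiniteDimensional ℝ E] [MeasurableSpace E]
    [BorelSpace E] {T : E → E} {t : ℝ} {μ ν : Measure E} [ν.IsAddHaarMeasure]
    (hT : IsConvexGradient T) (ht : t ∈ Ico 0 1) (hμ : μ ≪ ν) :
    μ.map (displacementInterpolation T t) ≪ ν := by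
  have hanti : AntilipschitzWith (1 - t).toNNReal⁻¹ (displacementInterpolation T t) := by
    refine antilipschitzWith_of_mul_norm_sub_le (Real.toNNReal_pos.2 (sub_pos.2 ht.2)).ne' ?_
    rw [Real.coe_toNNReal _ (sub_nonneg.2 ht.2.le)]
    exact hT.mul_norm_sub_le_norm_displacementInterpolation_sub ht.1
  have hmeas : Measurable (displacementInterpolation T t) :=
    (hT.displacementInterpolation (Ico_subset_Icc_self ht)).measurable
  exact map_absolutelyContinuous_addHaar_of_antilipschitzWith hanti hmeas.aemeasurable hμ

theorem statement14_general {E : Type*} [NormedAddCommGroup E] [InnerProductSpace ℝ E]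
    [FiniteDimensional ℝ E] [MeasurableSpace E] [BorelSpace E] (ν : Measure E)
    [ν.IsAddHaarMeasure] {u : E → E} {c₀ : ℝ} (hc₀ : 0 < c₀)
    (hneg : IsConvexGradient fun x => x - c₀ • u x)
    (hpos : IsConvexGradient fun x => x + c₀ • u x) :
    (∀ c ∈ Icc (-c₀) c₀, IsConvexGradient fun x => x + c • u x) ∧
      ∀ c : ℝ, |c| < c₀ →
        (∀ x y : E, (1 - |c| / c₀) * ‖x - y‖ ≤ ‖(x + c • u x) - (y + c • u y)‖) ∧
          ∀ μ : Measure E, μ ≪ ν → μ.map (fun x => x + c • u x) ≪ ν := by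
  have htime (c : ℝ) : 0 ≤ |c| / c₀ := div_nonneg (abs_nonneg c) hc₀.le
  have hpath := IsConvexGradient.exists_displacementInterpolation_eq_id_add_smul hc₀ hneg hpos
  refine ⟨fun c hc => ?_, fun c hc => ?_⟩ <;> obtain ⟨T, hT, hTc⟩ := hpath c
  · exact hTc ▸ hT.displacementInterpolation ⟨htime c, (div_le_one hc₀).2 (abs_le.2 hc)⟩
  · refine ⟨fun x y => ?_, fun μ hμ => ?_⟩
    · simpa only [hTc] using
        hT.mul_norm_sub_le_norm_displacementInterpolation_sub (htime c) x y
    · exact hTc ▸ hT.map_displacementInterpolation_absolutelyContinuous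
        ⟨htime c, (div_lt_one hc₀).2 hc⟩ hμ

/-- Symmetric two-sided cut locus claim: if both `k ↦ k - c₀Aᵀη(k)` and
`k ↦ k + c₀Aᵀη(k)` are gradients of convex differentiable functions, then (i) for every
`c ∈ [-c₀, c₀]` the map `T_c(k) = k + cAᵀη(k)` is the gradient of a convex differentiable
function, and (ii) for `|c| < c₀`, `T_c` is expanding with constant `1 - |c|/c₀` and
pushes absolutely continuous measures to absolutely continuous measures. -/
theorem statement14 (d : ℕ) (hd : 1 ≤ d) (c₀ : ℝ) (hc₀ : 0 < c₀)
    (η : EuclideanSpace ℝ (Fin d) → EuclideanSpace ℝ (Fin d))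
    (A : Matrix (Fin d) (Fin d) ℝ)
    (φ ψ : EuclideanSpace ℝ (Fin d) → ℝ)
    (hφconv : ConvexOn ℝ Set.univ φ) (hφdiff : Differentiable ℝ φ)
    (hψconv : ConvexOn ℝ Set.univ ψ) (hψdiff : Differentiable ℝ ψ)
    (hφgrad : ∀ k, gradient φ k = k - c₀ • matVec d A.transpose (η k))
    (hψgrad : ∀ k, gradient ψ k = k + c₀ • matVec d A.transpose (η k)) :
    (∀ c : ℝ, c ∈ Set.Icc (-c₀) c₀ →
        ∃ χ : EuclideanSpace ℝ (Fin d) → ℝ,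
          ConvexOn ℝ Set.univ χ ∧ Differentiable ℝ χ ∧
            ∀ k, gradient χ k = k + c • matVec d A.transpose (η k)) ∧
      ∀ c : ℝ, |c| < c₀ →
        (∀ x y : EuclideanSpace ℝ (Fin d),
            (1 - |c| / c₀) * ‖x - y‖ ≤
              ‖(x + c • matVec d A.transpose (η x)) - (y + c • matVec d A.transpose (η y))‖) ∧
          ∀ μ : Measure (EuclideanSpace ℝ (Fin d)), μ ≪ volume →
            Measure.map (fun k => k + c • matVec d A.transpose (η k)) μ ≪ volume := by
  simpa only [IsConvexGradient.iff_exists_gradient_eq] using statement14_general volume hc₀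
    (IsConvexGradient.iff_exists_gradient_eq.2 ⟨φ, hφconv, hφdiff, hφgrad⟩)
    (IsConvexGradient.iff_exists_gradient_eq.2 ⟨ψ, hψconv, hψdiff, hψgrad⟩)
end
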